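/- For any optimal solution (x*, m^I, m^D) of the problem (OPT1), the triple (x*, a*, b*) defined by a*_i = m^I_i x*_i and b*_i = m^D_i x*_i for all i is an optimal solution of the problem (OPT2); in particular the optimal values of (OPT1) and (OPT2) coincide. -/

import Mathlib

open Finset

/-- The ℓ2 (Euclidean) norm of a finitely-indexed real vector. -/
noncomputable def l2norm {ι : Type*} [Fintype ι] (v : ι → ℝ) : ℝ :=
  Real.sqrt (∑ i, v i ^ 2)

/-- Feasibility for problem (OPT2). -/
def OPT2Feasible {n N : ℕ} (ΦI ΦD : Matrix (Fin n) (Fin N) ℝ) (yI yD : Fin n → ℝ)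
    (εI εD UI UD : ℝ) (x a b : Fin N → ℝ) : Prop :=
  (∀ i, 0 ≤ x i ∧ x i ≤ 1) ∧
  l2norm (yI - ΦI.mulVec a) ≤ εI ∧
  l2norm (yD - ΦD.mulVec b) ≤ εD ∧
  (∀ i, |a i| ≤ UI * x i) ∧
  (∀ i, |b i| ≤ UD * x i)

/-- Optimality for problem (OPT2). -/
def OPT2Optimal {n N : ℕ} (ΦI ΦD : Matrix (Fin n) (Fin N) ℝ) (yI yD : Fin n → ℝ)
    (εI εD UI UD : ℝ) (x a b : Fin N → ℝ) : Prop :=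
  OPT2Feasible ΦI ΦD yI yD εI εD UI UD x a b ∧
  ∀ x' a' b' : Fin N → ℝ, OPT2Feasible ΦI ΦD yI yD εI εD UI UD x' a' b' →
    ∑ i, x i ≤ ∑ i, x' i

/-- Feasibility for problem (OPT1). -/
def OPT1Feasible {n N : ℕ} (ΦI ΦD : Matrix (Fin n) (Fin N) ℝ) (yI yD : Fin n → ℝ)
    (εI εD UI UD : ℝ) (x mI mD : Fin N → ℝ) : Prop :=
  (∀ i, 0 ≤ x i ∧ x i ≤ 1) ∧
  l2norm (yI - ΦI.mulVec (fun i => mI i * x i)) ≤ εI ∧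
  l2norm (yD - ΦD.mulVec (fun i => mD i * x i)) ≤ εD ∧
  (∀ i, |mI i| ≤ UI) ∧
  (∀ i, |mD i| ≤ UD)

/-- Optimality for problem (OPT1). -/
def OPT1Optimal {n N : ℕ} (ΦI ΦD : Matrix (Fin n) (Fin N) ℝ) (yI yD : Fin n → ℝ)
    (εI εD UI UD : ℝ) (x mI mD : Fin N → ℝ) : Prop :=
  OPT1Feasible ΦI ΦD yI yD εI εD UI UD x mI mD ∧
  ∀ x' mI' mD' : Fin N → ℝ, OPT1Feasible ΦI ΦD yI yD εI εD UI UD x' mI' mD' →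
    ∑ i, x i ≤ ∑ i, x' i

theorem abs_mul_le_mul_of_abs_le {R : Type*} [Ring R] [LinearOrder R] [IsOrderedRing R]
    {U x m : R} (hx : 0 ≤ x) (hm : |m| ≤ U) : |m * x| ≤ U * x := by
  rw [abs_mul, abs_of_nonneg hx]
  exact mul_le_mul_of_nonneg_right hm hx

section LinearOrderedField

variable {K : Type*} [Field K] [LinearOrder K] [IsStrictOrderedRing K] {U x a : K}

theorem abs_div_le_of_abs_le_mul (hU : 0 ≤ U) (hx : 0 ≤ x) (ha : |a| ≤ U * x) :
    |a / x| ≤ U := by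
  rw [abs_div, abs_of_nonneg hx]
  exact div_le_of_le_mul₀ hx hU ha

theorem div_mul_cancel_of_abs_le_mul (ha : |a| ≤ U * x) : a / x * x = a :=
  div_mul_cancel_of_imp fun hx => by simpa [hx] using ha

end LinearOrderedField

section Feasibility

variable {n N : ℕ} {ΦI ΦD : Matrix (Fin n) (Fin N) ℝ} {yI yD : Fin n → ℝ}
  {εI εD UI UD : ℝ} {x mI mD a b : Fin N → ℝ}

theorem OPT1Feasible.opt2Feasible_mul
    (h : OPT1Feasible ΦI ΦD yI yD εI εD UI UD x mI mD) :
    OPT2Feasible ΦI ΦD yI yD εI εD UI UD x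
      (fun i => mI i * x i) (fun i => mD i * x i) := by
  obtain ⟨hx, hresI, hresD, hmI, hmD⟩ := h
  exact ⟨hx, hresI, hresD, fun i => abs_mul_le_mul_of_abs_le (hx i).1 (hmI i),
    fun i => abs_mul_le_mul_of_abs_le (hx i).1 (hmD i)⟩

/-- Dividing by `x i = 0` is harmless: the bounds `|a i| ≤ UI * x i` and `|b i| ≤ UD * x i` then
force `a i = b i = 0`, which is what the multipliers `0 / 0 = 0` give back. -/
theorem OPT2Feasible.opt1Feasible_div (hUI : 0 ≤ UI) (hUD : 0 ≤ UD)
    (h : OPT2Feasible ΦI ΦD yI yD εI εD UI UD x a b) :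
    OPT1Feasible ΦI ΦD yI yD εI εD UI UD x
      (fun i => a i / x i) (fun i => b i / x i) := by
  obtain ⟨hx, hresI, hresD, ha, hb⟩ := h
  have ha_eq : (fun i => a i / x i * x i) = a :=
    funext fun i => div_mul_cancel_of_abs_le_mul (ha i)
  have hb_eq : (fun i => b i / x i * x i) = b :=
    funext fun i => div_mul_cancel_of_abs_le_mul (hb i)
  exact ⟨hx, by rwa [ha_eq], by rwa [hb_eq],
    fun i => abs_div_le_of_abs_le_mul hUI (hx i).1 (ha i),
    fun i => abs_div_le_of_abs_le_mul hUD (hx i).1 (hb i)⟩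

end Feasibility

/-- For any optimal solution `(x*, mI, mD)` of (OPT1), the triple `(x*, a*, b*)` defined by
`a* i = mI i * x* i` and `b* i = mD i * x* i` is an optimal solution of (OPT2); in particular
the optimal values of (OPT1) and (OPT2) coincide. -/
theorem opt1_optimal_gives_opt2_optimal {n N : ℕ}
    (ΦI ΦD : Matrix (Fin n) (Fin N) ℝ) (yI yD : Fin n → ℝ)
    (εI εD UI UD : ℝ) (hεI : 0 ≤ εI) (hεD : 0 ≤ εD) (hUI : 0 < UI) (hUD : 0 < UD)
    (x mI mD : Fin N → ℝ)
    (hopt : OPT1Optimal ΦI ΦD yI yD εI εD UI UD x mI mD) :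
    OPT2Optimal ΦI ΦD yI yD εI εD UI UD x
      (fun i => mI i * x i) (fun i => mD i * x i) := by
  obtain ⟨hfeas, hmin⟩ := hopt
  refine ⟨hfeas.opt2Feasible_mul, fun x' a b hab => ?_⟩
  exact hmin x' _ _ (hab.opt1Feasible_div hUI.le hUD.le)
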